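/- Let X = (X^j_k) be a real n×n matrix, determining the linear vector field V_ξ(z) = Xz on V = ℝ^n, and let ι_ξ be the contraction with V_ξ on Ω_s(V) = 𝒮(V) ⊗ Λ(V*): the degree −1 graded derivation with ι_ξ(f ⊗ 1) = 0 and ι_ξ(f ⊗ ψ^j) = (X^j_k z^k f) ⊗ 1. Then for every f ⊗ η ∈ 𝒮(V) ⊗ Λ(V*): 𝓕(ι_ξ(f ⊗ η)) = (−∂/∂b_j ⊗ (ξ·ψ̄_j) ∧) 𝓕(f ⊗ η), summation over j, where ξ·ψ̄_j = −X^k_j ψ̄_k is the induced action of ξ on the dual generators, ∂/∂b_j acts on the Schwartz factor, and the wedge is left multiplication in Λ(V). Equivalently, 𝓕(ι_ξ(f ⊗ η)) = Σ_{j,k} X^j_k (∂/∂b_k ⊗ ψ̄_j ∧) 𝓕(f ⊗ η). -/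

import Mathlib

/-!
STATEMENT 10.  Context: as in Statement 9, differential forms on `V = ℝⁿ` with
Schwartz coefficients are `𝒮(ℝⁿ,ℂ) ⊗ Λ(V*)` (generators `lamGen j = ψ^j = dz^j`),
the dual side is `𝒮(V*,ℂ) ⊗ Λ(V)` (generators `ψ̄_j`), and the combined Fourier
transform is `𝓕 = FT ⊗ 𝓕_Λ` with `FT f (b) = ∫ f(z) e^{i⟨b,z⟩} dz` and `𝓕_Λ` the
Grassmann Fourier transform (`grFourierL`, via the Berezin integral `Ber`).
A real `n×n` matrix `X` determines the linear vector field `V_ξ(z) = Xz`, whose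
contraction `ι_ξ = Σ_j (X^j_k z^k ·) ⊗ ι_j` (`iotaXi`) is the odd derivation with
`ι_ξ(f ⊗ ψ^j) = (X^j_k z^k f) ⊗ 1`.

Conclusion: `𝓕 ∘ ι_ξ = Σ_{j,k} X^j_k (∂/∂b_k ⊗ ψ̄_j ∧ ·) ∘ 𝓕`.
-/

open Finset

noncomputable section

/-- `Λ(V* ⊕ V)`, a model of the ℤ₂-graded tensor product `Λ(V*) ⊗ Λ(V)`. -/
abbrev Egr (n : ℕ) := ExteriorAlgebra ℂ ((Fin n → ℂ) × (Fin n → ℂ))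

/-- The generators `ψ^a` of the `Λ(V)` factor. -/
def psv (n : ℕ) (a : Fin n) : Egr n := ExteriorAlgebra.ι ℂ (0, Pi.single a 1)

/-- The generators `ψ̄_a` of the `Λ(V*)` factor. -/
def psb (n : ℕ) (a : Fin n) : Egr n := ExteriorAlgebra.ι ℂ (Pi.single a 1, 0)

/-- The top monomial `ψ^1 ∧ … ∧ ψ^n`. -/
def psvTop (n : ℕ) : Egr n := ((List.finRange n).map (psv n)).prod

/-- The subalgebra `Λ(V*) ⊆ Λ(V* ⊕ V)`. -/
def AlgD (n : ℕ) : Subalgebra ℂ (Egr n) := Algebra.adjoin ℂ (Set.range (psb n))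

/-- The subspace `Λ¹(V) ⊆ Λ(V* ⊕ V)`; `(PV n) ^ k` is `Λ^k(V)`. -/
def PV (n : ℕ) : Submodule ℂ (Egr n) := Submodule.span ℂ (Set.range (psv n))

/-- The Fourier kernel `e^{i ψ̄_j ⊗ ψ^j}`; the series terminates at the n-th power. -/
def fourierKernel (n : ℕ) : Egr n :=
  ∑ m ∈ range (n + 1),
    ((Nat.factorial m : ℂ))⁻¹ • (Complex.I • ∑ j, psb n j * psv n j) ^ m


/-- The exterior algebra `Λ` on an `n`-dimensional complex vector space
(modeling both `Λ(V*)` and `Λ(V)`). -/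
abbrev Lam (n : ℕ) := ExteriorAlgebra ℂ (Fin n → ℂ)

/-- Its degree-1 generators. -/
def lamGen (n : ℕ) (a : Fin n) : Lam n := ExteriorAlgebra.ι ℂ (Pi.single a 1)

/-- The embedding of `Lam n` as the second (integrated-over) factor of `Egr n`. -/
def emb2 (n : ℕ) : Lam n →ₐ[ℂ] Egr n :=
  ExteriorAlgebra.lift ℂ
    ⟨(ExteriorAlgebra.ι ℂ).comp (LinearMap.inr ℂ (Fin n → ℂ) (Fin n → ℂ)),
      fun _ => ExteriorAlgebra.ι_sq_zero _⟩

/-- The projection of `Egr n` onto its first factor `Lam n`. -/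
def proj1 (n : ℕ) : Egr n →ₐ[ℂ] Lam n :=
  ExteriorAlgebra.lift ℂ
    ⟨(ExteriorAlgebra.ι ℂ).comp (LinearMap.fst ℂ (Fin n → ℂ) (Fin n → ℂ)),
      fun _ => ExteriorAlgebra.ι_sq_zero _⟩

/-- The Grassmann Fourier transform `𝓕_Λ(η) = ∫dψ (η · e^{i ψ̄_j ψ^j})`,
as a linear map `Λ(V*) → Λ(V)`. -/
def grFourierL (n : ℕ) (Ber : Egr n →ₗ[ℂ] Egr n) : Lam n →ₗ[ℂ] Lam n :=
  (proj1 n).toLinearMap ∘ₗ Ber ∘ₗ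
    (LinearMap.mulRight ℂ (fourierKernel n)) ∘ₗ (emb2 n).toLinearMap

/-- Schwartz functions on `ℝⁿ` (with complex values). -/
abbrev Sch (n : ℕ) := SchwartzMap (Fin n → ℝ) ℂ

open scoped TensorProduct


/-- The contraction `ι_ξ` with the linear vector field `V_ξ(z) = Xz`:
`ι_ξ = Σ_j (Σ_k X^j_k z^k ·) ⊗ ι_j` on `𝒮(V) ⊗ Λ(V*)`. -/
def iotaXi (n : ℕ) (mulZ : Fin n → Sch n →ₗ[ℂ] Sch n)
    (ctd : Fin n → Lam n →ₗ[ℂ] Lam n) :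
    Sch n ⊗[ℂ] Lam n →ₗ[ℂ] Sch n ⊗[ℂ] Lam n :=
  ∑ j, TensorProduct.map (mulZ j) (ctd j)


/-! ### Auxiliary material -/

/-- The contraction with the `j`-th generator of the second factor. -/
def DDc (n : ℕ) (j : Fin n) : Egr n →ₗ[ℂ] Egr n :=
  CliffordAlgebra.contractLeft (Q := (0 : QuadraticForm ℂ ((Fin n → ℂ) × (Fin n → ℂ))))
    ((LinearMap.proj j : (Fin n → ℂ) →ₗ[ℂ] ℂ) ∘ₗ LinearMap.snd ℂ (Fin n → ℂ) (Fin n → ℂ))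

lemma DDc_ι_mul (n : ℕ) (j : Fin n) (v : (Fin n → ℂ) × (Fin n → ℂ)) (y : Egr n) :
    DDc n j (ExteriorAlgebra.ι ℂ v * y) = v.2 j • y - ExteriorAlgebra.ι ℂ v * DDc n j y :=
  CliffordAlgebra.contractLeft_ι_mul _ _ _

lemma DDc_algebraMap (n : ℕ) (j : Fin n) (r : ℂ) :
    DDc n j (algebraMap ℂ (Egr n) r) = 0 :=
  CliffordAlgebra.contractLeft_algebraMap _ _ _

lemma DDc_one (n : ℕ) (j : Fin n) : DDc n j 1 = 0 := by
  simpa using DDc_algebraMap n j 1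

lemma DDc_psb (n : ℕ) (j a : Fin n) (y : Egr n) :
    DDc n j (psb n a * y) = -(psb n a * DDc n j y) := by
  simp [psb, DDc_ι_mul]

lemma DDc_psv (n : ℕ) (j a : Fin n) (y : Egr n) :
    DDc n j (psv n a * y) = (if a = j then (1 : ℂ) else 0) • y - psv n a * DDc n j y := by
  simp [psv, DDc_ι_mul, Pi.single_apply, eq_comm]

lemma ι_anti {M : Type*} [AddCommGroup M] [Module ℂ M] (x y : M) :
    ExteriorAlgebra.ι ℂ x * ExteriorAlgebra.ι ℂ y
      = -(ExteriorAlgebra.ι ℂ y * ExteriorAlgebra.ι ℂ x) :=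
  eq_neg_of_add_eq_zero_left (ExteriorAlgebra.ι_add_mul_swap x y)

lemma ι_comm2 {M : Type*} [AddCommGroup M] [Module ℂ M] (x y z : M) :
    Commute (ExteriorAlgebra.ι ℂ x * ExteriorAlgebra.ι ℂ y) (ExteriorAlgebra.ι ℂ z) := by
  unfold Commute SemiconjBy
  rw [mul_assoc, ι_anti y z, mul_neg, ← mul_assoc, ι_anti x z, neg_mul, neg_neg, mul_assoc]

/-- The exponent (without the factor `i`). -/
def SSe (n : ℕ) : Egr n := ∑ j, psb n j * psv n j

lemma SSe_comm_psb (n : ℕ) (j : Fin n) : Commute (SSe n) (psb n j) :=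
  Commute.sum_left _ _ _ fun _ _ => ι_comm2 _ _ _

lemma SSe_pow (n : ℕ) : SSe n ^ (n + 1) = 0 := by
  have key : ∀ s : Finset (Fin n), (∑ j ∈ s, psb n j * psv n j) ^ (s.card + 1) = 0 := by
    intro s
    induction s using Finset.induction_on with
    | empty => simp
    | insert a s ha ih =>
      rw [Finset.sum_insert ha, Finset.card_insert_of_notMem ha]
      refine Commute.add_pow_eq_zero_of_add_le_succ_of_pow_eq_zero (m := 2) ?_ ?_ ih (by omega)
      · exact Commute.sum_right _ _ _ fun i _ =>
          Commute.mul_right (ι_comm2 _ _ _) (ι_comm2 _ _ _)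
      · have h0 : psv n a * psv n a = 0 := ExteriorAlgebra.ι_sq_zero _
        have h1 : Commute (psb n a * psv n a) (psb n a) := ι_comm2 _ _ _
        rw [sq, ← mul_assoc, h1.eq, mul_assoc, mul_assoc, h0, mul_zero, mul_zero]
  simpa [SSe] using key Finset.univ

lemma DDc_SSe_mul (n : ℕ) (j : Fin n) (y : Egr n) :
    DDc n j (SSe n * y) = -(psb n j * y) + SSe n * DDc n j y := by
  simp only [SSe, Finset.sum_mul, map_sum, mul_assoc, DDc_psb, DDc_psv, mul_sub, neg_sub,
    Finset.sum_sub_distrib]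
  rw [sub_eq_add_neg, add_comm]
  simp

lemma DDc_SSe_pow (n : ℕ) (j : Fin n) (m : ℕ) :
    DDc n j (SSe n ^ (m + 1)) = -((m + 1 : ℂ) • (psb n j * SSe n ^ m)) := by
  induction m with
  | zero => simpa [DDc_one] using DDc_SSe_mul n j 1
  | succ m ih =>
    rw [pow_succ', DDc_SSe_mul, ih, mul_neg, mul_smul_comm, ← mul_assoc,
      (SSe_comm_psb n j).eq, mul_assoc, ← pow_succ']
    push_cast
    module

lemma psb_SSe_pow (n : ℕ) (j : Fin n) : psb n j * SSe n ^ n = 0 := by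
  have h := DDc_SSe_pow n j n
  rw [SSe_pow, map_zero] at h
  have h2 : (n + 1 : ℂ) ≠ 0 := by exact_mod_cast Nat.succ_ne_zero n
  have h3 := neg_eq_zero.mp h.symm
  exact (smul_eq_zero.mp h3).resolve_left h2

lemma fourierKernel_eq (n : ℕ) : fourierKernel n =
    ∑ m ∈ range (n + 1), (((Nat.factorial m : ℂ))⁻¹ * Complex.I ^ m) • SSe n ^ m := by
  simp only [fourierKernel, SSe, smul_pow, smul_smul]

lemma DDc_kernel (n : ℕ) (j : Fin n) :
    DDc n j (fourierKernel n) = -(Complex.I • (psb n j * fourierKernel n)) := by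
  rw [fourierKernel_eq, map_sum, Finset.sum_range_succ', Finset.sum_range_succ, mul_add,
    mul_smul_comm, psb_SSe_pow, smul_zero, add_zero, pow_zero, map_smul, pow_zero, DDc_one, smul_zero,
    add_zero, Finset.mul_sum, Finset.smul_sum, ← Finset.sum_neg_distrib]
  refine Finset.sum_congr rfl fun m _ => ?_
  rw [map_smul, DDc_SSe_pow, smul_neg, smul_smul, mul_smul_comm, smul_smul]
  congr 2
  have h2 : (m + 1 : ℂ) ≠ 0 := by exact_mod_cast Nat.succ_ne_zero m
  have h3 : (Nat.factorial m : ℂ) ≠ 0 := by exact_mod_cast Nat.factorial_ne_zero m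
  rw [Nat.factorial_succ]
  push_cast
  field_simp
  ring

lemma psb_mem (n : ℕ) (j : Fin n) : psb n j ∈ AlgD n :=
  Algebra.subset_adjoin ⟨j, rfl⟩

lemma AlgD_D (n : ℕ) (j : Fin n) {ξ : Egr n} (hξ : ξ ∈ AlgD n) :
    ∃ ξ' ∈ AlgD n, ∀ y, DDc n j (ξ * y) = ξ' * DDc n j y := by
  unfold AlgD at hξ
  induction hξ using Algebra.adjoin_induction with
  | mem x hx =>
    obtain ⟨a, rfl⟩ := hx
    exact ⟨-psb n a, neg_mem (psb_mem n a), fun y => by rw [DDc_psb, neg_mul]⟩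
  | algebraMap r =>
    exact ⟨algebraMap _ _ r, Subalgebra.algebraMap_mem _ _, fun y => by
      rw [← Algebra.smul_def, map_smul, Algebra.smul_def]⟩
  | add x y _ _ hx hy =>
    obtain ⟨x', hx', hx⟩ := hx
    obtain ⟨y', hy', hy⟩ := hy
    exact ⟨x' + y', add_mem hx' hy', fun z => by rw [add_mul, map_add, hx, hy, add_mul]⟩
  | mul x y _ _ hx hy =>
    obtain ⟨x', hx', hx⟩ := hx
    obtain ⟨y', hy', hy⟩ := hy
    exact ⟨x' * y', mul_mem hx' hy', fun z => by rw [mul_assoc, hx, hy, mul_assoc]⟩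

lemma AlgD_psv (n : ℕ) {ξ : Egr n} (hξ : ξ ∈ AlgD n) :
    ∃ ξ' ∈ AlgD n, ∀ a, psv n a * ξ = ξ' * psv n a := by
  unfold AlgD at hξ
  induction hξ using Algebra.adjoin_induction with
  | mem x hx =>
    obtain ⟨a, rfl⟩ := hx
    exact ⟨-psb n a, neg_mem (psb_mem n a), fun y => by rw [neg_mul]; exact ι_anti _ _⟩
  | algebraMap r =>
    exact ⟨algebraMap _ _ r, Subalgebra.algebraMap_mem _ _, fun y => (Algebra.commutes _ _).symm⟩
  | add x y _ _ hx hy =>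
    obtain ⟨x', hx', hx⟩ := hx
    obtain ⟨y', hy', hy⟩ := hy
    exact ⟨x' + y', add_mem hx' hy', fun z => by rw [mul_add, hx, hy, add_mul]⟩
  | mul x y _ _ hx hy =>
    obtain ⟨x', hx', hx⟩ := hx
    obtain ⟨y', hy', hy⟩ := hy
    exact ⟨x' * y', mul_mem hx' hy', fun z => by rw [← mul_assoc, hx, mul_assoc, hy, mul_assoc]⟩

lemma ι_decomp (n : ℕ) (v : (Fin n → ℂ) × (Fin n → ℂ)) :
    ExteriorAlgebra.ι ℂ v = ∑ a, v.1 a • psb n a + ∑ a, v.2 a • psv n a := by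
  simp only [psb, psv, ← map_smul, ← map_sum, ← map_add]
  congr 1
  ext i <;> simp [Prod.fst_sum, Prod.snd_sum, Finset.sum_apply, Pi.single_apply]

/-- Induction principle: `Λ(V* ⊕ V)` is spanned by products. -/
lemma Egr_span (n : ℕ) (P : Egr n → Prop) (h0 : P 0) (hadd : ∀ x y, P x → P y → P (x + y))
    (hmul : ∀ ξ ∈ AlgD n, ∀ k, ∀ y ∈ ((PV n) ^ k : Submodule ℂ (Egr n)), P (ξ * y))
    (x : Egr n) : P x := by
  let T : Set (Egr n) := {x | ∃ ξ ∈ AlgD n, ∃ k, ∃ y ∈ ((PV n) ^ k : Submodule ℂ (Egr n)),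
    x = ξ * y}
  have hT : ∀ x ∈ Submodule.span ℂ T, P x := by
    intro x hx
    induction hx using Submodule.closure_induction with
    | zero => exact h0
    | add x y _ _ hx hy => exact hadd x y hx hy
    | smul_mem r x hx =>
      obtain ⟨ξ, hξ, k, y, hy, rfl⟩ := hx
      rw [← smul_mul_assoc]
      exact hmul _ (Subalgebra.smul_mem _ hξ r) k y hy
  apply hT
  induction x using CliffordAlgebra.left_induction with
  | algebraMap r =>
    refine Submodule.subset_span ⟨algebraMap _ _ r, Subalgebra.algebraMap_mem _ _, 0, 1, ?_, ?_⟩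
    · rw [pow_zero]; exact Submodule.one_le.mp le_rfl
    · rw [mul_one]
  | add x y hx hy => exact add_mem hx hy
  | ι_mul x v hx =>
    change ExteriorAlgebra.ι ℂ v * x ∈ _
    have hb : ∀ a, psb n a * x ∈ Submodule.span ℂ T := by
      intro a
      induction hx using Submodule.span_induction with
      | zero => simp
      | add x y _ _ hx hy => rw [mul_add]; exact add_mem hx hy
      | smul r x _ hx => rw [mul_smul_comm]; exact Submodule.smul_mem _ _ hx
      | mem x hx =>
        obtain ⟨ξ, hξ, k, y, hy, rfl⟩ := hx
        exact Submodule.subset_span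
          ⟨psb n a * ξ, mul_mem (psb_mem n a) hξ, k, y, hy, by rw [mul_assoc]⟩
    have hv : ∀ a, psv n a * x ∈ Submodule.span ℂ T := by
      intro a
      clear hb
      induction hx using Submodule.span_induction with
      | zero => simp
      | add x y _ _ hx hy => rw [mul_add]; exact add_mem hx hy
      | smul r x _ hx => rw [mul_smul_comm]; exact Submodule.smul_mem _ _ hx
      | mem x hx =>
        obtain ⟨ξ, hξ, k, y, hy, rfl⟩ := hx
        obtain ⟨ξ', hξ', h⟩ := AlgD_psv n hξ
        refine Submodule.subset_span ⟨ξ', hξ', k + 1, psv n a * y, ?_, ?_⟩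
        · rw [pow_succ']
          exact Submodule.mul_mem_mul (Submodule.subset_span ⟨a, rfl⟩) hy
        · rw [← mul_assoc, h, mul_assoc]
    rw [ι_decomp, add_mul, Finset.sum_mul, Finset.sum_mul]
    refine add_mem (sum_mem fun a _ => ?_) (sum_mem fun a _ => ?_)
    · rw [smul_mul_assoc]; exact Submodule.smul_mem _ _ (hb a)
    · rw [smul_mul_assoc]; exact Submodule.smul_mem _ _ (hv a)

lemma PV_pow_span (n k : ℕ) (N : Submodule ℂ (Egr n))
    (h : ∀ f : Fin k → Fin n,
      ExteriorAlgebra.ιMulti ℂ k (fun i => ((0, Pi.single (f i) 1) : (Fin n → ℂ) × (Fin n → ℂ)))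
        ∈ N) : (PV n) ^ k ≤ N := by
  rw [PV, Submodule.span_pow, Submodule.span_le]
  intro x hx
  obtain ⟨f, rfl⟩ := Set.mem_pow.mp hx
  choose g hg using fun i => (f i).2
  have := h g
  rw [ExteriorAlgebra.ιMulti_apply] at this
  simpa [← hg, psv] using this

lemma PV_pow_gt (n k : ℕ) (hk : n < k) : (PV n) ^ k = ⊥ := by
  rw [eq_bot_iff]
  refine PV_pow_span n k _ fun f => ?_
  rw [Submodule.mem_bot]
  apply AlternatingMap.map_eq_zero_of_not_injective
  intro hinj
  have hf : Function.Injective f := fun a b hab => hinj (by simp [hab])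
  have := Fintype.card_le_of_injective f hf
  simp at this
  omega

lemma PV_pow_top (n : ℕ) : (PV n) ^ n ≤ Submodule.span ℂ {psvTop n} := by
  refine PV_pow_span n n _ fun f => ?_
  by_cases hf : Function.Injective f
  · let e : Equiv.Perm (Fin n) := Equiv.ofBijective f (Finite.injective_iff_bijective.mp hf)
    have h := AlternatingMap.map_perm (ExteriorAlgebra.ιMulti ℂ n)
      (fun i : Fin n => ((0, Pi.single i 1) : (Fin n → ℂ) × (Fin n → ℂ))) e
    have h2 : ExteriorAlgebra.ιMulti ℂ n
      (fun i : Fin n => ((0, Pi.single i 1) : (Fin n → ℂ) × (Fin n → ℂ))) = psvTop n := by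
      rw [ExteriorAlgebra.ιMulti_apply, psvTop, List.ofFn_eq_map]
      rfl
    rw [h2] at h
    change ExteriorAlgebra.ιMulti ℂ n
      ((fun i : Fin n => ((0, Pi.single i 1) : (Fin n → ℂ) × (Fin n → ℂ))) ∘ e) ∈ _
    rw [h]
    rcases Int.units_eq_one_or (Equiv.Perm.sign e) with h3 | h3 <;> rw [h3]
    · rw [one_smul]; exact Submodule.mem_span_singleton_self _
    · rw [Units.neg_smul, one_smul]; exact neg_mem (Submodule.mem_span_singleton_self _)
  · rw [AlternatingMap.map_eq_zero_of_not_injective]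
    · exact zero_mem _
    · intro hinj
      apply hf
      intro a b hab
      exact hinj (by simp [hab])

lemma DDc_PV (n : ℕ) (j : Fin n) (k : ℕ) : ∀ y ∈ ((PV n) ^ (k + 1) : Submodule ℂ (Egr n)),
    DDc n j y ∈ (PV n) ^ k := by
  induction k with
  | zero =>
    intro y hy
    rw [zero_add, pow_one, PV] at hy
    rw [pow_zero]
    induction hy using Submodule.span_induction with
    | zero => simp
    | add x y _ _ hx hy => rw [map_add]; exact add_mem hx hy
    | smul r x _ hx => rw [map_smul]; exact Submodule.smul_mem _ _ hx
    | mem x hx =>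
      obtain ⟨a, rfl⟩ := hx
      have := DDc_psv n j a 1
      rw [mul_one, DDc_one, mul_zero, sub_zero] at this
      rw [this]
      exact Submodule.smul_mem _ _ (Submodule.one_le.mp le_rfl)
  | succ k ih =>
    intro y hy
    rw [pow_succ'] at hy
    induction hy using Submodule.mul_induction_on' with
    | add x _ y _ hx hy => rw [map_add]; exact add_mem hx hy
    | mem_mul_mem m hm y hy =>
      rw [PV] at hm
      induction hm using Submodule.span_induction with
      | zero => simp
      | add x z _ _ hx hz => rw [add_mul, map_add]; exact add_mem hx hz
      | smul r x _ hx => rw [smul_mul_assoc, map_smul]; exact Submodule.smul_mem _ _ hx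
      | mem x hx =>
        obtain ⟨a, rfl⟩ := hx
        rw [DDc_psv]
        refine sub_mem (Submodule.smul_mem _ _ hy) ?_
        rw [pow_succ']
        exact Submodule.mul_mem_mul (Submodule.subset_span ⟨a, rfl⟩) (ih y hy)

lemma Ber_DDc {n : ℕ} (Ber : Egr n →ₗ[ℂ] Egr n)
    (hBer_low : ∀ ξ ∈ AlgD n, ∀ k < n, ∀ y ∈ ((PV n) ^ k : Submodule ℂ (Egr n)),
      Ber (ξ * y) = 0) (j : Fin n) (x : Egr n) : Ber (DDc n j x) = 0 := by
  induction x using Egr_span with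
  | h0 => simp
  | hadd x y hx hy => rw [map_add, map_add, hx, hy, add_zero]
  | hmul ξ hξ k y hy =>
    obtain ⟨ξ', hξ', h⟩ := AlgD_D n j hξ
    rw [h]
    rcases k with _ | k
    · rw [pow_zero] at hy
      obtain ⟨r, rfl⟩ := Submodule.mem_one.mp hy
      rw [DDc_algebraMap, mul_zero, map_zero]
    · by_cases hk : k < n
      · exact hBer_low _ hξ' k hk _ (DDc_PV n j k y hy)
      · rw [PV_pow_gt n (k + 1) (by omega), Submodule.mem_bot] at hy
        rw [hy, map_zero, mul_zero, map_zero]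

lemma Ber_psb {n : ℕ} (Ber : Egr n →ₗ[ℂ] Egr n)
    (hBer_top : ∀ ξ ∈ AlgD n, Ber (ξ * psvTop n) = ξ)
    (hBer_low : ∀ ξ ∈ AlgD n, ∀ k < n, ∀ y ∈ ((PV n) ^ k : Submodule ℂ (Egr n)),
      Ber (ξ * y) = 0) (j : Fin n) (x : Egr n) : Ber (psb n j * x) = psb n j * Ber x := by
  induction x using Egr_span with
  | h0 => simp
  | hadd x y hx hy => rw [mul_add, map_add, map_add, hx, hy, mul_add]
  | hmul ξ hξ k y hy =>
    have hξ' := mul_mem (psb_mem n j) hξ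
    rw [← mul_assoc]
    rcases lt_trichotomy k n with hk | rfl | hk
    · rw [hBer_low _ hξ' k hk y hy, hBer_low _ hξ k hk y hy, mul_zero]
    · obtain ⟨c, rfl⟩ := Submodule.mem_span_singleton.mp (PV_pow_top _ hy)
      rw [mul_smul_comm, mul_smul_comm, map_smul, map_smul, hBer_top _ hξ', hBer_top _ hξ,
        mul_smul_comm]
    · rw [PV_pow_gt n k hk, Submodule.mem_bot] at hy
      simp [hy]

lemma lam_ι_decomp (n : ℕ) (v : Fin n → ℂ) :
    ExteriorAlgebra.ι ℂ v = ∑ a, v a • lamGen n a := by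
  simp only [lamGen, ← map_smul, ← map_sum]
  congr 1
  ext i
  simp [Finset.sum_apply, Pi.single_apply]

lemma emb2_ι (n : ℕ) (v : Fin n → ℂ) :
    emb2 n (ExteriorAlgebra.ι ℂ v) = ExteriorAlgebra.ι ℂ ((0, v) : (Fin n → ℂ) × (Fin n → ℂ)) := by
  simp [emb2]

lemma proj1_psb (n : ℕ) (j : Fin n) : proj1 n (psb n j) = lamGen n j := by
  simp [proj1, psb, lamGen]

lemma grFourier_ctd {n : ℕ} (Ber : Egr n →ₗ[ℂ] Egr n)
    (hBer_top : ∀ ξ ∈ AlgD n, Ber (ξ * psvTop n) = ξ)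
    (hBer_low : ∀ ξ ∈ AlgD n, ∀ k < n, ∀ y ∈ ((PV n) ^ k : Submodule ℂ (Egr n)),
      Ber (ξ * y) = 0)
    (σΛ : Lam n →ₗ[ℂ] Lam n) (hσ_mul : ∀ x y, σΛ (x * y) = σΛ x * σΛ y)
    (hσ_one : σΛ 1 = 1) (hσ_gen : ∀ i, σΛ (lamGen n i) = -lamGen n i)
    (ctd : Fin n → Lam n →ₗ[ℂ] Lam n)
    (hctd_der : ∀ j x y, ctd j (x * y) = ctd j x * y + σΛ x * ctd j y)
    (hctd_gen : ∀ j i, ctd j (lamGen n i) = if i = j then 1 else 0)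
    (j : Fin n) (η : Lam n) :
    grFourierL n Ber (ctd j η) = Complex.I • (lamGen n j * grFourierL n Ber η) := by
  have hσι : ∀ v : Fin n → ℂ, σΛ (ExteriorAlgebra.ι ℂ v) = -ExteriorAlgebra.ι ℂ v := by
    intro v
    rw [lam_ι_decomp, map_sum, ← Finset.sum_neg_distrib]
    exact Finset.sum_congr rfl fun a _ => by rw [map_smul, hσ_gen, smul_neg]
  have hcι : ∀ v : Fin n → ℂ, ctd j (ExteriorAlgebra.ι ℂ v) = v j • 1 := by
    intro v
    rw [lam_ι_decomp, map_sum]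
    simp [hctd_gen]
  have hc1 : ctd j 1 = 0 := by
    have := hctd_der j 1 1
    rw [hσ_one, mul_one, mul_one, one_mul] at this
    simpa using this
  have hsw : ∀ η : Lam n, emb2 n (σΛ η) * psb n j = psb n j * emb2 n η := by
    intro η
    induction η using CliffordAlgebra.left_induction with
    | algebraMap r =>
      rw [Algebra.algebraMap_eq_smul_one, map_smul, hσ_one]
      simp
    | add x y hx hy => rw [map_add, map_add, map_add, add_mul, mul_add, hx, hy]
    | ι_mul x v hx =>
      change emb2 n (σΛ (ExteriorAlgebra.ι ℂ v * x)) * _ = _ * emb2 n (ExteriorAlgebra.ι ℂ v * x)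
      rw [hσ_mul, hσι, map_mul, mul_assoc, hx, map_neg, emb2_ι, map_mul, emb2_ι, ← mul_assoc,
        ← mul_assoc, neg_mul]
      congr 1
      exact (ι_anti _ _).symm
  have hD : ∀ (η : Lam n) (y : Egr n), DDc n j (emb2 n η * y)
      = emb2 n (ctd j η) * y + emb2 n (σΛ η) * DDc n j y := by
    intro η
    induction η using CliffordAlgebra.left_induction with
    | algebraMap r =>
      intro y
      rw [Algebra.algebraMap_eq_smul_one, (ctd j).map_smul, σΛ.map_smul, hσ_one, hc1]
      simp
    | add x y hx hy =>
      intro z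
      rw [map_add, add_mul, map_add, hx, hy, map_add, map_add, map_add, map_add]
      noncomm_ring
    | ι_mul x v hx =>
      intro y
      change DDc n j (emb2 n (ExteriorAlgebra.ι ℂ v * x) * y)
        = emb2 n (ctd j (ExteriorAlgebra.ι ℂ v * x)) * y
          + emb2 n (σΛ (ExteriorAlgebra.ι ℂ v * x)) * DDc n j y
      rw [hσ_mul, hσι, hctd_der, hcι, hσι, map_mul (emb2 n), emb2_ι, mul_assoc, DDc_ι_mul, hx, map_add,
        map_mul, map_mul, map_mul, map_neg, emb2_ι, map_smul, map_one]
      simp only [smul_mul_assoc, one_mul, add_mul, mul_add, neg_mul, mul_assoc]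
      abel
  simp only [grFourierL, LinearMap.comp_apply, AlgHom.toLinearMap_apply,
    LinearMap.mulRight_apply]
  rw [← proj1_psb, ← map_mul, ← map_smul]
  congr 1
  rw [← Ber_psb Ber hBer_top hBer_low]
  have h := congrArg Ber (hD η (fourierKernel n))
  rw [Ber_DDc Ber hBer_low, DDc_kernel, map_add, mul_neg, mul_smul_comm, ← mul_assoc, hsw, map_neg,
    map_smul, mul_assoc] at h
  exact (sub_eq_zero.mp (by rw [sub_eq_add_neg]; exact h.symm))

open MeasureTheory in
lemma FT_deriv {n : ℕ} (f F : Sch n)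
    (hF : ∀ b : Fin n → ℝ,
      F b = ∫ z : Fin n → ℝ, Complex.exp (Complex.I * ∑ j, (b j : ℂ) * (z j : ℂ)) * f z)
    (b u : Fin n → ℝ) :
    fderiv ℝ (⇑F) b u = ∫ z : Fin n → ℝ,
      Complex.exp (Complex.I * ∑ j, (b j : ℂ) * (z j : ℂ)) *
        (Complex.I * ((∑ k, (u k : ℂ) * (z k : ℂ)) * f z)) := by
  let L0 : (Fin n → ℝ) →ₗ[ℝ] (Fin n → ℝ) →L[ℝ] ℝ :=
    LinearMap.toContinuousLinearMap.toLinearMap ∘ₗ ((-(2 * Real.pi)⁻¹) • dotProductBilin ℝ ℝ)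
  let L : (Fin n → ℝ) →L[ℝ] (Fin n → ℝ) →L[ℝ] ℝ := LinearMap.toContinuousLinearMap L0
  have hL : ∀ z w, L z w = -(2 * Real.pi)⁻¹ * ∑ j, z j * w j := by
    intro z w
    simp [L, L0, dotProduct]
  have hchar : ∀ z w, ((Real.fourierChar (-L z w) : Circle) : ℂ)
      = Complex.exp (Complex.I * ∑ j, (w j : ℂ) * (z j : ℂ)) := by
    intro z w
    rw [Real.fourierChar_apply, hL]
    congr 1
    have : (Real.pi : ℂ) ≠ 0 := by exact_mod_cast Real.pi_ne_zero
    push_cast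
    simp only [mul_comm (w _ : ℂ)]
    field_simp
  have hi1 : Integrable (⇑f) := f.integrable
  have hi2 : Integrable (fun v : Fin n → ℝ => ‖v‖ * ‖f v‖) := by
    simpa using f.integrable_pow_mul volume 1
  have hd := VectorFourier.hasFDerivAt_fourierIntegral L hi1 hi2 b
  have hFeq : VectorFourier.fourierIntegral Real.fourierChar volume L.toLinearMap₁₂ (⇑f) = ⇑F := by
    funext w
    rw [hF, VectorFourier.fourierIntegral]
    refine integral_congr_ae (Filter.Eventually.of_forall fun z => ?_)
    change ((Real.fourierChar (-L z w) : Circle) : ℂ) * f z = _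
    rw [hchar]
  rw [hFeq] at hd
  rw [hd.fderiv, VectorFourier.fourierIntegral]
  have hi4 : Integrable (VectorFourier.fourierSMulRight L f) := by
    refine (hi2.const_mul (2 * Real.pi * ‖L‖)).mono' hi1.aestronglyMeasurable.fourierSMulRight
      (Filter.Eventually.of_forall fun v => ?_)
    rw [← mul_assoc]
    exact VectorFourier.norm_fourierSMulRight_le L f v
  have hi3 : Integrable (fun v => Real.fourierChar (-L.toLinearMap₁₂ v b) •
      VectorFourier.fourierSMulRight L f v) :=
    (VectorFourier.fourierIntegral_convergent_iff Real.continuous_fourierChar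
      (by apply L.continuous₂ : Continuous
        (fun p : (Fin n → ℝ) × (Fin n → ℝ) ↦ L.toLinearMap₁₂ p.1 p.2)) b).2 hi4
  rw [ContinuousLinearMap.integral_apply hi3]
  refine integral_congr_ae (Filter.Eventually.of_forall fun z => ?_)
  change ((Real.fourierChar (-L z b) : Circle) : ℂ) *
    (-(2 * Real.pi * Complex.I) * ((L z u : ℝ) • f z)) = _
  rw [hchar, hL, Complex.real_smul]
  congr 1
  have : (Real.pi : ℂ) ≠ 0 := by exact_mod_cast Real.pi_ne_zero
  push_cast
  simp only [mul_comm (u _ : ℂ)]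
  field_simp

theorem statement10 {n : ℕ} (X : Matrix (Fin n) (Fin n) ℝ)
    -- the Berezin integral defining the Grassmann Fourier transform
    (Ber : Egr n →ₗ[ℂ] Egr n)
    (hBer_top : ∀ ξ ∈ AlgD n, Ber (ξ * psvTop n) = ξ)
    (hBer_low : ∀ ξ ∈ AlgD n, ∀ k < n, ∀ y ∈ ((PV n) ^ k : Submodule ℂ (Egr n)),
      Ber (ξ * y) = 0)
    -- the Fourier transform f̂(b) = ∫ f(z) e^{i⟨b,z⟩} dz on Schwartz space
    (FT : Sch n →ₗ[ℂ] Sch n)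
    (hFT : ∀ (f : Sch n) (b : Fin n → ℝ),
      FT f b = ∫ z : Fin n → ℝ, Complex.exp (Complex.I * ∑ j, (b j : ℂ) * (z j : ℂ)) * f z)
    -- multiplication by the components X^j_k z^k of the vector field
    (mulZ : Fin n → Sch n →ₗ[ℂ] Sch n)
    (hmulZ : ∀ j (f : Sch n) (z : Fin n → ℝ),
      mulZ j f z = (∑ k, (X j k : ℂ) * (z k : ℂ)) * f z)
    -- the partial derivatives ∂/∂b_k on the dual Schwartz space
    (pdb : Fin n → Sch n →ₗ[ℂ] Sch n)
    (hpdb : ∀ k (f : Sch n) (b : Fin n → ℝ), pdb k f b = fderiv ℝ (⇑f) b (Pi.single k 1))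
    -- the parity involution of Λ and the contractions ι_j dual to the generators ψ^j
    (σΛ : Lam n →ₗ[ℂ] Lam n) (hσ_mul : ∀ x y, σΛ (x * y) = σΛ x * σΛ y)
    (hσ_one : σΛ 1 = 1) (hσ_gen : ∀ i, σΛ (lamGen n i) = -lamGen n i)
    (ctd : Fin n → Lam n →ₗ[ℂ] Lam n)
    (hctd_der : ∀ j x y, ctd j (x * y) = ctd j x * y + σΛ x * ctd j y)
    (hctd_gen : ∀ j i, ctd j (lamGen n i) = if i = j then 1 else 0) :
    -- Conclusion: 𝓕(ι_ξ w) = Σ_{j,k} X^j_k (∂/∂b_k ⊗ ψ̄_j ∧ ·) (𝓕 w).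
    ∀ w : Sch n ⊗[ℂ] Lam n,
      TensorProduct.map FT (grFourierL n Ber) (iotaXi n mulZ ctd w)
        = (∑ j, ∑ k, (X j k : ℂ) •
            TensorProduct.map (pdb k) (LinearMap.mulLeft ℂ (lamGen n j)))
            (TensorProduct.map FT (grFourierL n Ber) w) := by
  intro w
  induction w using TensorProduct.induction_on with
  | zero => simp only [map_zero]
  | add x y hx hy => simp only [map_add, hx, hy]
  | tmul f η =>
    have hkey : ∀ j, Complex.I • FT (mulZ j f) = ∑ k, (X j k : ℂ) • pdb k (FT f) := by
      intro j
      ext b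
      have h1 : (∑ k, (X j k : ℂ) • pdb k (FT f)) b = fderiv ℝ (⇑(FT f)) b (X j) := by
        rw [SchwartzMap.sum_apply]
        simp only [SchwartzMap.smul_apply, hpdb]
        conv_rhs => rw [pi_eq_sum_univ' (X j), map_sum]
        refine Finset.sum_congr rfl fun k _ => ?_
        rw [map_smul, Complex.real_smul, smul_eq_mul]
      rw [h1, FT_deriv f (FT f) (hFT f), SchwartzMap.smul_apply, hFT, smul_eq_mul,
        ← MeasureTheory.integral_const_mul]
      congr 1
      funext z
      rw [hmulZ]
      ring
    simp only [iotaXi, LinearMap.sum_apply, LinearMap.smul_apply, TensorProduct.map_tmul, map_sum,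
      LinearMap.mulLeft_apply]
    refine Finset.sum_congr rfl fun j _ => ?_
    rw [grFourier_ctd Ber hBer_top hBer_low σΛ hσ_mul hσ_one hσ_gen ctd hctd_der hctd_gen,
      TensorProduct.tmul_smul, TensorProduct.smul_tmul', hkey, TensorProduct.sum_tmul]
    refine Finset.sum_congr rfl fun k _ => ?_
    rw [TensorProduct.smul_tmul']
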